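/- Let Â = A + εB be an n×n dual matrix and let P be the Moore–Penrose inverse of A. Then the following are equivalent: (a) there exists a group inverse G of A such that G − ε·G·B·G is a dual group generalized inverse of Â; (b) rank(A²) = rank(A) and P − ε·P·B·P is a dual Moore–Penrose generalized inverse of Â. -/

import Mathlib

open Matrix

/-- The dual matrix `A + εB`, viewed as a matrix over the dual numbers `ℝ[ε]`. -/
def dm {n : ℕ} (A B : Matrix (Fin n) (Fin n) ℝ) :
    Matrix (Fin n) (Fin n) (DualNumber ℝ) :=
  fun i j => TrivSqZeroExt.inl (A i j) + TrivSqZeroExt.inr (B i j)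

/-- A dual matrix has dual index one iff its column space equals that of its square,
equivalently (as shown in the paper) there is a dual matrix `X` with `M² * X = M`. -/
def DualIndexOne {n : ℕ} (M : Matrix (Fin n) (Fin n) (DualNumber ℝ)) : Prop :=
  ∃ X : Matrix (Fin n) (Fin n) (DualNumber ℝ), M * M * X = M

/-- `G` is a group inverse of the real matrix `A`. -/
def IsGroupInv {n : ℕ} (A G : Matrix (Fin n) (Fin n) ℝ) : Prop :=
  A * G * A = A ∧ G * A * G = G ∧ A * G = G * A

/-- `X` is the Moore–Penrose inverse of the real matrix `A`. -/
def IsMoorePenrose {n : ℕ} (A X : Matrix (Fin n) (Fin n) ℝ) : Prop :=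
  A * X * A = A ∧ X * A * X = X ∧ (A * X)ᵀ = A * X ∧ (X * A)ᵀ = X * A

/-- `C` is a core inverse of the real matrix `A`. -/
def IsCoreInv {n : ℕ} (A C : Matrix (Fin n) (Fin n) ℝ) : Prop :=
  A * C * A = A ∧ A * (C * C) = C ∧ (A * C)ᵀ = A * C

/-- `G` is a dual group generalized inverse (DGGI) of the dual matrix `M`. -/
def IsDGGI {n : ℕ} (M G : Matrix (Fin n) (Fin n) (DualNumber ℝ)) : Prop :=
  M * G * M = M ∧ G * M * G = G ∧ M * G = G * M

/-- `X` is a dual Moore–Penrose generalized inverse (DMPGI) of the dual matrix `M`. -/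
def IsDMPGI {n : ℕ} (M X : Matrix (Fin n) (Fin n) (DualNumber ℝ)) : Prop :=
  M * X * M = M ∧ X * M * X = X ∧ (M * X)ᵀ = M * X ∧ (X * M)ᵀ = X * M

/-- `G` is a dual core generalized inverse (DCGI) of the dual matrix `M`. -/
def IsDCGI {n : ℕ} (M G : Matrix (Fin n) (Fin n) (DualNumber ℝ)) : Prop :=
  M * G * M = M ∧ M * (G * G) = G ∧ (M * G)ᵀ = M * G

theorem dm_mul {n : ℕ} (A B C D : Matrix (Fin n) (Fin n) ℝ) :
    dm A B * dm C D = dm (A * C) (A * D + B * C) := by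
  ext i j
  · simp [dm, Matrix.mul_apply, TrivSqZeroExt.fst_sum]
  · simp [dm, Matrix.mul_apply, TrivSqZeroExt.snd_sum, Finset.sum_add_distrib, mul_comm]

theorem dm_inj {n : ℕ} (A B C D : Matrix (Fin n) (Fin n) ℝ) :
    dm A B = dm C D ↔ A = C ∧ B = D := by
  constructor
  · intro h
    constructor
    · ext i j
      have := congrArg TrivSqZeroExt.fst (congrFun (congrFun h i) j)
      simpa [dm] using this
    · ext i j
      have := congrArg TrivSqZeroExt.snd (congrFun (congrFun h i) j)
      simpa [dm] using this
  · rintro ⟨rfl, rfl⟩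
    rfl

theorem dm_tr {n : ℕ} (A B : Matrix (Fin n) (Fin n) ℝ) : (dm A B)ᵀ = dm Aᵀ Bᵀ := rfl

theorem exists_right {n : ℕ} (A : Matrix (Fin n) (Fin n) ℝ) (h : (A * A).rank = A.rank) :
    ∃ X, A * A * X = A := by
  have hle : LinearMap.range (A * A).mulVecLin ≤ LinearMap.range A.mulVecLin := by
    rw [Matrix.mulVecLin_mul]
    exact LinearMap.range_comp_le_range _ _
  have he := Submodule.eq_of_le_of_finrank_eq hle h
  have hx : ∀ j, ∃ x, (A * A).mulVec x = A.mulVec (Pi.single j 1) := by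
    intro j
    have : A.mulVecLin (Pi.single j 1) ∈ LinearMap.range (A * A).mulVecLin := by
      rw [he]; exact ⟨_, rfl⟩
    exact this
  choose f hf using hx
  refine ⟨Matrix.of fun i j => f j i, ?_⟩
  ext i j
  have := congrFun (hf j) i
  rw [Matrix.mulVec_single_one] at this
  exact this

theorem exists_group {n : ℕ} (A : Matrix (Fin n) (Fin n) ℝ) (h : (A * A).rank = A.rank) :
    ∃ G, IsGroupInv A G := by
  obtain ⟨X, hX⟩ := exists_right A h
  obtain ⟨Z, hZ⟩ := exists_right Aᵀ (by
    rw [← Matrix.transpose_mul, Matrix.rank_transpose, Matrix.rank_transpose, h])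
  obtain ⟨Y, hY⟩ : ∃ Y, Y * (A * A) = A := ⟨Zᵀ, by
    have := congrArg Matrix.transpose hZ
    simpa [Matrix.transpose_mul] using this⟩
  have e : Y * A = A * X := by
    calc Y * A = Y * (A * A * X) := by rw [hX]
      _ = Y * (A * A) * X := by simp only [mul_assoc]
      _ = A * X := by rw [hY]
  have h1 : A * (A * X * X) = A * X := by
    rw [← mul_assoc, ← mul_assoc, hX]
  have h2 : A * X * X * A = A * X := by
    calc A * X * X * A = Y * (A * X) * A := by rw [← e, mul_assoc Y, e]
      _ = Y * (Y * (A * A)) := by rw [← e]; simp only [mul_assoc]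
      _ = A * X := by rw [hY, e]
  have h3 : A * X * A = A := by rw [← e, mul_assoc, hY]
  refine ⟨A * X * X, ?_, ?_, ?_⟩
  · rw [h1, h3]
  · rw [h2, ← mul_assoc, ← mul_assoc, h3]
  · rw [h1, h2]

theorem common_fwd {n : ℕ} {A B X : Matrix (Fin n) (Fin n) ℝ}
    (a : A * X * B + (A * -(X * B * X) + B * X) * A = B)
    (c : A * -(X * B * X) + B * X = 0) (d : X * B + -(X * B * X) * A = 0) :
    A * X * B = B ∧ B * (X * A) = B := by
  rw [c, zero_mul, add_zero] at a
  refine ⟨a, ?_⟩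
  have d' : X * B = X * B * X * A := by
    rw [neg_mul, ← sub_eq_add_neg, sub_eq_zero] at d
    exact d
  calc B * (X * A) = A * X * B * (X * A) := by rw [a]
    _ = A * (X * B * X * A) := by simp only [mul_assoc]
    _ = B := by rw [← d', ← mul_assoc, a]

theorem common_bwd {n : ℕ} {A B X : Matrix (Fin n) (Fin n) ℝ} (h2 : X * A * X = X)
    (a : A * X * B = B) (b : B * (X * A) = B) :
    A * -(X * B * X) + B * X = 0 ∧ X * B + -(X * B * X) * A = 0 ∧
      X * A * -(X * B * X) + 0 = -(X * B * X) := by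
  refine ⟨?_, ?_, ?_⟩
  · rw [mul_neg, ← mul_assoc, ← mul_assoc, a, neg_add_cancel]
  · rw [neg_mul, mul_assoc, mul_assoc, b, add_neg_cancel]
  · rw [mul_neg, ← mul_assoc, ← mul_assoc, h2, add_zero]

theorem common_proj {n : ℕ} {A B X : Matrix (Fin n) (Fin n) ℝ} (h1 : A * X * A = A)
    (h2 : X * A * X = X) :
    (A * -(X * B * X) + B * X) * (A * X) = A * -(X * B * X) + B * X ∧
    A * X * (A * -(X * B * X) + B * X) = 0 ∧
    X * A * (X * B + -(X * B * X) * A) = X * B + -(X * B * X) * A ∧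
    (X * B + -(X * B * X) * A) * (X * A) = 0 := by
  have r1 : A * (X * A) = A := by rw [← mul_assoc, h1]
  have r2 : X * (A * X) = X := by rw [← mul_assoc, h2]
  have r1' : ∀ Z, A * (X * (A * Z)) = A * Z := fun Z => by rw [← mul_assoc, ← mul_assoc, h1]
  have r2' : ∀ Z, X * (A * (X * Z)) = X * Z := fun Z => by rw [← mul_assoc, ← mul_assoc, h2]
  refine ⟨?_, ?_, ?_, ?_⟩ <;>
    simp [mul_assoc, mul_add, add_mul, r1, r2, r1', r2']

theorem dggi_iff {n : ℕ} (A B G : Matrix (Fin n) (Fin n) ℝ) (hG : IsGroupInv A G) :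
    IsDGGI (dm A B) (dm G (-(G * B * G))) ↔ A * G * B = B ∧ B * (G * A) = B := by
  obtain ⟨h1, h2, h3⟩ := hG
  obtain ⟨s1, s2, s3, s4⟩ := common_proj (B := B) h1 h2
  simp only [IsDGGI, dm_mul, dm_inj]
  constructor
  · rintro ⟨⟨-, a⟩, -, -, c⟩
    have d0 : G * B + -(G * B * G) * A = 0 := by
      rw [← s3, ← c, ← h3, s2]
    exact common_fwd a (c.trans d0) d0
  · rintro ⟨a, b⟩
    obtain ⟨e1, e2, e3⟩ := common_bwd h2 a b
    rw [e1, e2]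
    exact ⟨⟨h1, by simp [a]⟩, ⟨h2, by rw [zero_mul]; exact e3⟩, h3, rfl⟩

theorem dmpgi_iff {n : ℕ} (A B P : Matrix (Fin n) (Fin n) ℝ) (hP : IsMoorePenrose A P) :
    IsDMPGI (dm A B) (dm P (-(P * B * P))) ↔ A * P * B = B ∧ B * (P * A) = B := by
  obtain ⟨h1, h2, h3, h4⟩ := hP
  obtain ⟨s1, s2, s3, s4⟩ := common_proj (B := B) h1 h2
  simp only [IsDMPGI, dm_mul, dm_inj, dm_tr]
  constructor
  · rintro ⟨⟨-, a⟩, -, ⟨-, c⟩, -, d⟩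
    have c0 : A * -(P * B * P) + B * P = 0 := by
      have := congrArg Matrix.transpose s1
      rw [Matrix.transpose_mul, h3, c, s2] at this
      exact this.symm
    have d0 : P * B + -(P * B * P) * A = 0 := by
      have := congrArg Matrix.transpose s3
      rw [Matrix.transpose_mul, h4, d, s4] at this
      exact this.symm
    exact common_fwd a c0 d0
  · rintro ⟨a, b⟩
    obtain ⟨e1, e2, e3⟩ := common_bwd h2 a b
    rw [e1, e2]
    exact ⟨⟨h1, by simp [a]⟩, ⟨h2, by rw [zero_mul]; exact e3⟩, ⟨h3, by simp⟩, h4, by simp⟩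

theorem stmt18 {n : ℕ} (A B P : Matrix (Fin n) (Fin n) ℝ)
    (hP : IsMoorePenrose A P) :
    (∃ G : Matrix (Fin n) (Fin n) ℝ, IsGroupInv A G ∧
        IsDGGI (dm A B) (dm G (-(G * B * G)))) ↔
      ((A * A).rank = A.rank ∧ IsDMPGI (dm A B) (dm P (-(P * B * P)))) := by
  rw [dmpgi_iff A B P hP]
  have key : ∀ U V : Matrix (Fin n) (Fin n) ℝ, A * V * A = A →
      (A * U * B = B ∧ B * (U * A) = B) → (A * V * B = B ∧ B * (V * A) = B) := by
    rintro U V h ⟨a, b⟩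
    constructor
    · calc A * V * B = A * V * (A * U * B) := by rw [a]
        _ = (A * V * A) * U * B := by simp only [mul_assoc]
        _ = B := by rw [h, a]
    · calc B * (V * A) = B * (U * A) * (V * A) := by rw [b]
        _ = B * (U * (A * V * A)) := by simp only [mul_assoc]
        _ = B := by rw [h, b]
  constructor
  · rintro ⟨G, hG, h⟩
    rw [dggi_iff A B G hG] at h
    refine ⟨le_antisymm (Matrix.rank_mul_le_left _ _) ?_, key G P hP.1 h⟩
    have : A * A * G = A := by rw [mul_assoc, hG.2.2, ← mul_assoc, hG.1]
    calc A.rank = (A * A * G).rank := by rw [this]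
      _ ≤ _ := Matrix.rank_mul_le_left _ _
  · rintro ⟨hr, h⟩
    obtain ⟨G, hG⟩ := exists_group A hr
    exact ⟨G, hG, (dggi_iff A B G hG).2 (key P G hG.1 h)⟩
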